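/- Let ρ ∈ Φ and let x ∈ Q ∩ V₁ be such that w(x) ∉ V₀ for every w ∈ W (so that s_ρ·x = (s_ρ(x))^ is defined). Let L(ρ̂, x) denote the affine line through ρ̂ and x (note ρ̂ ≠ x since B(ρ̂,ρ̂) ≠ 0 = B(x,x)). Then: (a) if B(ρ,x) = 0, then L(ρ̂,x) ∩ Q = {x} and s_ρ·x = x; (b) if B(ρ,x) ≠ 0, then s_ρ·x ≠ x and L(ρ̂,x) ∩ Q = {x, s_ρ·x}. -/

import Mathlib

open Filter Topology

noncomputable section

variable {ι V : Type*} [Fintype ι] [NormedAddCommGroup V] [NormedSpace ℝ V]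

/-- The set of simple `B`-reflections: the linear automorphisms of `V` given by the
`B`-reflection formula `u ↦ u - 2 (B α u / B α α) • α` associated to a simple root `α ∈ Δ`. -/
def simpleReflections (B : LinearMap.BilinForm ℝ V) (Δ : Module.Basis ι ℝ V) :
    Set (V ≃ₗ[ℝ] V) :=
  { e | ∃ i : ι, ∀ u : V, e u = u - (2 * B (Δ i) u / B (Δ i) (Δ i)) • Δ i }

/-- The geometric Coxeter group `W`: the subgroup of linear automorphisms of `V`
generated by the simple `B`-reflections. -/
def cox (B : LinearMap.BilinForm ℝ V) (Δ : Module.Basis ι ℝ V) : Subgroup (V ≃ₗ[ℝ] V) :=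
  Subgroup.closure (simpleReflections B Δ)

/-- The root system `Φ = W ⬝ Δ`. -/
def Phi (B : LinearMap.BilinForm ℝ V) (Δ : Module.Basis ι ℝ V) : Set V :=
  { ρ | ∃ w ∈ cox B Δ, ∃ i : ι, w (Δ i) = ρ }

/-- The positive roots `Φ⁺ = Φ ∩ cone(Δ)`. -/
def posPhi (B : LinearMap.BilinForm ℝ V) (Δ : Module.Basis ι ℝ V) : Set V :=
  { ρ ∈ Phi B Δ | ∀ i : ι, 0 ≤ Δ.repr ρ i }

/-- `|v|₁`: the sum of the coordinates of `v` in the basis `Δ`. -/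
def l1 (Δ : Module.Basis ι ℝ V) (v : V) : ℝ := ∑ i : ι, Δ.repr v i

/-- The normalization map `v ↦ v̂ = v / |v|₁`. -/
def nrm (Δ : Module.Basis ι ℝ V) (v : V) : V := (l1 Δ v)⁻¹ • v

/-- The set `Φ̂` of normalized roots. -/
def nPhi (B : LinearMap.BilinForm ℝ V) (Δ : Module.Basis ι ℝ V) : Set V :=
  nrm Δ '' posPhi B Δ

/-- `E(Φ)`: the set of accumulation points of the set of normalized roots. -/
def Eset (B : LinearMap.BilinForm ℝ V) (Δ : Module.Basis ι ℝ V) : Set V :=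
  { x | AccPt x (𝓟 (nPhi B Δ)) }

/-- The isotropic cone `Q` of `B`. -/
def isoQ (B : LinearMap.BilinForm ℝ V) : Set V := { v | B v v = 0 }

/-- The affine line through two points `a` and `b`. -/
def lineThrough (a b : V) : Set V := { y : V | ∃ t : ℝ, y = a + t • (b - a) }

/-- The `B`-reflection formula: `s_ρ(x) = x - 2 (B ρ x / B ρ ρ) • ρ`. -/
def reflAt (B : LinearMap.BilinForm ℝ V) (ρ x : V) : V := x - (2 * B ρ x / B ρ ρ) • ρ

/-! Restricted to the line `t ↦ ρ̂ + t (x - ρ̂)`, the quadratic form is a nonzero multiple of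
`(1 - t) (1 - t |s_ρ x|₁)`. The root `t = 1` is the point `x` and the root `t = 1 / |s_ρ x|₁` is
the point `s_ρ·x`.

The point needing Coxeter theory is `|ρ|₁ ≠ 0`, which holds because every root is either positive
or negative. To show `w αᵢ ≥ 0` when `sᵢ` is not a right descent of `w`, strip from `w` its
longest alternating suffix in `sᵢ` and `sⱼ`, where `sⱼ` is a right descent. By induction on length
the remaining factor sends `αᵢ` and `αⱼ` into the positive cone, while the suffix sends `αᵢ` to a
combination of `αᵢ` and `αⱼ` whose coefficients are Chebyshev values `Uₙ(-B(αᵢ, αⱼ))`. These are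
nonnegative since `n` stays below the Coxeter label of `i` and `j`.
-/

section ChebyshevSign

open Polynomial.Chebyshev

theorem chebyshevU_eval_add_one (c : ℝ) (n : ℤ) :
    (U ℝ (n + 1)).eval c = 2 * c * (U ℝ n).eval c - (U ℝ (n - 1)).eval c := by
  simp [U_add_one]

theorem chebyshevU_eval_nonneg_of_one_le {c : ℝ} (hc : 1 ≤ c) (n : ℕ) :
    0 ≤ (U ℝ n).eval c := by
  suffices 0 ≤ (U ℝ (n - 1)).eval c ∧ (U ℝ (n - 1)).eval c ≤ (U ℝ n).eval c from
    this.1.trans this.2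
  induction n with
  | zero => simp
  | succ n ih =>
    push_cast
    rw [add_sub_cancel_right, chebyshevU_eval_add_one]
    exact ⟨ih.1.trans ih.2, by nlinarith⟩

variable {k : ℕ}

theorem sin_pi_div_pos (hk : 2 ≤ k) : 0 < Real.sin (Real.pi / k) := by
  refine Real.sin_pos_of_pos_of_lt_pi (by positivity) (div_lt_self Real.pi_pos ?_)
  exact_mod_cast hk

theorem chebyshevU_eval_cos_pi_div (hk : 2 ≤ k) (n : ℤ) :
    (U ℝ n).eval (Real.cos (Real.pi / k)) =
      Real.sin ((n + 1) * (Real.pi / k)) / Real.sin (Real.pi / k) :=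
  eq_div_of_mul_eq (sin_pi_div_pos hk).ne' (U_real_cos _ _)

theorem chebyshevU_eval_cos_pi_div_nonneg (hk : 2 ≤ k) {n : ℕ} (hn : n < k) :
    0 ≤ (U ℝ n).eval (Real.cos (Real.pi / k)) := by
  rw [chebyshevU_eval_cos_pi_div hk]
  refine div_nonneg (Real.sin_nonneg_of_nonneg_of_le_pi (by positivity) ?_) (sin_pi_div_pos hk).le
  have hnk : ((n : ℤ) : ℝ) + 1 ≤ k := by exact_mod_cast hn
  rw [mul_div_left_comm]
  exact mul_le_of_le_one_right Real.pi_pos.le (div_le_one_of_le₀ hnk k.cast_nonneg)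

theorem chebyshevU_eval_cos_pi_div_add_two_mul (hk : 2 ≤ k) (n : ℤ) :
    (U ℝ (n + 2 * k)).eval (Real.cos (Real.pi / k)) =
      (U ℝ n).eval (Real.cos (Real.pi / k)) := by
  have hk0 : (k : ℝ) ≠ 0 := by positivity
  have hangle : ((n + 2 * k : ℤ) + 1 : ℝ) * (Real.pi / k) =
      (n + 1) * (Real.pi / k) + 2 * Real.pi := by
    push_cast
    field_simp
    ring
  rw [chebyshevU_eval_cos_pi_div hk, chebyshevU_eval_cos_pi_div hk, hangle, Real.sin_add_two_pi]

end ChebyshevSign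

section UnitReflection

open Polynomial.Chebyshev

variable {E : Type*} [AddCommGroup E] [Module ℝ E]

/-- The orthogonal reflection `u ↦ u - 2 B(a, u) • a` in a vector `a` with `B(a, a) = 1`. -/
def unitReflection (B : LinearMap.BilinForm ℝ E) {a : E} (ha : B a a = 1) : E ≃ₗ[ℝ] E :=
  Module.reflection (x := a) (f := (2 : ℝ) • B a) (by simp [ha])

variable {B : LinearMap.BilinForm ℝ E} {a b : E} (ha : B a a = 1) (hb : B b b = 1)

theorem unitReflection_apply (u : E) : unitReflection B ha u = u - (2 * B a u) • a := by
  simp [unitReflection, Module.reflection_apply]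

theorem unitReflection_apply_self : unitReflection B ha a = -a :=
  Module.reflection_apply_self _

theorem unitReflection_mul_self : unitReflection B ha * unitReflection B ha = 1 :=
  LinearEquiv.ext (Module.involutive_reflection _)

theorem bilin_unitReflection (hB : B.IsSymm) (u v : E) :
    B (unitReflection B ha u) (unitReflection B ha v) = B u v := by
  simp only [unitReflection_apply, map_sub, map_smul, LinearMap.sub_apply, LinearMap.smul_apply,
    smul_eq_mul, ha, hB.eq u a]
  ring

variable {c : ℝ}

theorem unitReflection_chebyshev (hba : B b a = -c) (n : ℤ) :
    unitReflection B hb ((U ℝ n).eval c • a + (U ℝ (n - 1)).eval c • b) =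
      (U ℝ n).eval c • a + (U ℝ (n + 1)).eval c • b := by
  simp only [unitReflection_apply, map_add, map_smul, hba, hb, chebyshevU_eval_add_one]
  module

theorem unitReflection_mul_pow_chebyshev (hab : B a b = -c) (hba : B b a = -c) (n : ℤ) (m : ℕ) :
    ((unitReflection B ha * unitReflection B hb) ^ m)
        ((U ℝ n).eval c • a + (U ℝ (n - 1)).eval c • b) =
      (U ℝ (n + 2 * m)).eval c • a + (U ℝ (n - 1 + 2 * m)).eval c • b := by
  induction m with
  | zero => simp
  | succ m ih =>
    have hb_step := unitReflection_chebyshev hb hba (n + 2 * m)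
    have ha_step := unitReflection_chebyshev ha hab (n + 2 * m + 1)
    rw [add_sub_cancel_right, add_comm (_ • b), add_comm (_ • b)] at ha_step
    rw [pow_succ', LinearEquiv.mul_apply, ih, LinearEquiv.mul_apply,
      show n - 1 + 2 * (m : ℤ) = n + 2 * m - 1 by ring, hb_step, ha_step]
    push_cast
    ring_nf

theorem unitReflection_mul_pow_apply_of_orthogonal {z : E} (haz : B a z = 0) (hbz : B b z = 0)
    (m : ℕ) : ((unitReflection B ha * unitReflection B hb) ^ m) z = z := by
  induction m with
  | zero => rfl
  | succ m ih => simp [pow_succ', ih, unitReflection_apply, haz, hbz]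

theorem unitReflection_mul_pow_eq_one (hB : B.IsSymm) {k : ℕ} (hk : 2 ≤ k)
    (hab : B a b = -Real.cos (Real.pi / k)) :
    (unitReflection B ha * unitReflection B hb) ^ k = 1 := by
  set c := Real.cos (Real.pi / k)
  have hba : B b a = -c := by rw [hB.eq, hab]
  set t := (unitReflection B ha * unitReflection B hb) ^ k
  have htn (n : ℤ) := unitReflection_mul_pow_chebyshev ha hb hab hba n k
  simp only [c, chebyshevU_eval_cos_pi_div_add_two_mul hk] at htn
  have hta : t a = a := by simpa using htn 0
  have htb : t b = b := by simpa using htn (-1)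
  have hdisc : 1 - c ^ 2 ≠ 0 := by
    rw [← Real.sin_sq]
    exact pow_ne_zero 2 (sin_pi_div_pos hk).ne'
  ext u
  -- The form is nondegenerate on the plane of `a` and `b`, so `u` splits orthogonally along it.
  set p := (B a u + c * B b u) / (1 - c ^ 2) with hp
  set q := (B b u + c * B a u) / (1 - c ^ 2) with hq
  have htz : t (u - p • a - q • b) = u - p • a - q • b := by
    apply unitReflection_mul_pow_apply_of_orthogonal <;>
    · simp only [map_sub, map_smul, smul_eq_mul, ha, hb, hab, hba, hp, hq]
      field_simp
      ring
  rw [map_sub, map_sub, map_smul, map_smul, hta, htb] at htz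
  simpa using htz

end UnitReflection

section AlternatingSuffix

open CoxeterSystem

variable {I W : Type*} [Group W] {M : CoxeterMatrix I} (cs : CoxeterSystem M W)

theorem exists_eq_mul_wordProd_alternatingWord (w : W) {i : I} (hi : ¬cs.IsRightDescent w i)
    (j : I) : ∃ v n, w = v * cs.wordProd (alternatingWord i j n) ∧ cs.length w = cs.length v + n ∧
      ¬cs.IsRightDescent v i ∧ ¬cs.IsRightDescent v j := by
  induction hn : cs.length w using Nat.strong_induction_on generalizing w i j with
  | _ _ ih =>
    subst hn
    by_cases hj : cs.IsRightDescent w j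
    · obtain ⟨v, n, hw, hlen, hvj, hvi⟩ := ih _ hj (w * cs.simple j)
        (cs.isRightDescent_iff_not_isRightDescent_mul.1 hj) i rfl
      refine ⟨v, n + 1, ?_, ?_, hvi, hvj⟩
      · rw [alternatingWord_succ, wordProd_concat, ← mul_assoc, ← hw,
          simple_mul_simple_cancel_right]
      · rw [← cs.isRightDescent_iff.1 hj, hlen, add_assoc]
    · exact ⟨w, 0, by simp [alternatingWord], by simp, hi, hj⟩

theorem lt_coxeterMatrix_of_not_isRightDescent {v : W} {i j : I} {n : ℕ}
    (hlen : cs.length (v * cs.wordProd (alternatingWord i j n)) = cs.length v + n)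
    (hi : ¬cs.IsRightDescent (v * cs.wordProd (alternatingWord i j n)) i) (hM : M i j ≠ 0) :
    n < M i j := by
  rw [not_isRightDescent_iff, hlen, mul_assoc, ← wordProd_concat, ← alternatingWord_succ] at hi
  have hle := cs.length_mul_le v (cs.wordProd (alternatingWord j i (n + 1)))
  have hreduced : cs.IsReduced (alternatingWord j i (n + 1)) := by
    refine le_antisymm (cs.length_wordProd_le _) ?_
    rw [length_alternatingWord]
    lia
  rw [M.symmetric] at hM ⊢
  by_contra! hMn
  exact cs.not_isReduced_alternatingWord j i hM (by lia) hreduced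

end AlternatingSuffix

section GeometricRepresentation

open CoxeterSystem Polynomial.Chebyshev

variable {I E W : Type*} [AddCommGroup E] [Module ℝ E] [Group W] {M : CoxeterMatrix I}
  {B : LinearMap.BilinForm ℝ E} {α : I → E}

/-- The family `α` of simple roots realizes the Coxeter matrix `M` in the space `(E, B)`. As in
Mathlib, the entry `0` of a Coxeter matrix stands for `∞`; the normalization `B(α i, α i) = 1` is
the case `M i i = 1`. The family need not be linearly independent. -/
structure IsGeometricRealization (M : CoxeterMatrix I) (B : LinearMap.BilinForm ℝ E)
    (α : I → E) : Prop where
  isSymm : B.IsSymm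
  eq_neg_cos {i j : I} : M i j ≠ 0 → B (α i) (α j) = -Real.cos (Real.pi / M i j)
  le_neg_one {i j : I} : M i j = 0 → B (α i) (α j) ≤ -1

theorem exists_isGeometricRealization (hB : B.IsSymm) (hdiag : ∀ i, B (α i) (α i) = 1)
    (hoff : ∀ i j, i ≠ j → B (α i) (α j) ≤ -1 ∨
      ∃ k : ℕ, 2 ≤ k ∧ B (α i) (α j) = -Real.cos (Real.pi / k)) :
    ∃ M : CoxeterMatrix I, IsGeometricRealization M B α := by
  classical
  have hlabel (r : ℝ) : ∃ m : ℕ, m ≠ 1 ∧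
      ((r ≤ -1 ∨ ∃ k : ℕ, 2 ≤ k ∧ r = -Real.cos (Real.pi / k)) →
        (m ≠ 0 → r = -Real.cos (Real.pi / m)) ∧ (m = 0 → r ≤ -1)) := by
    by_cases hr : ∃ k : ℕ, 2 ≤ k ∧ r = -Real.cos (Real.pi / k)
    · obtain ⟨k, hk, hrk⟩ := hr
      exact ⟨k, by lia, fun _ => ⟨fun _ => hrk, by lia⟩⟩
    · exact ⟨0, zero_ne_one, fun h => ⟨fun h0 => absurd rfl h0, fun _ => h.resolve_right hr⟩⟩
  choose label hlabel_ne_one hlabel_spec using hlabel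
  let M : CoxeterMatrix I :=
    { M := Matrix.of fun i j => if i = j then 1 else label (B (α i) (α j))
      isSymm := by ext i j; simp [hB.eq (α i), eq_comm]
      diagonal := by simp
      off_diagonal := fun i j hij => by simp [hij, hlabel_ne_one] }
  have hM {i j : I} (hij : i ≠ j) : M i j = label (B (α i) (α j)) := if_neg hij
  refine ⟨M, hB, fun {i j} h => ?_, fun {i j} h => ?_⟩ <;> obtain rfl | hij := eq_or_ne i j
  · simp [hdiag]
  · rw [hM hij] at h ⊢
    exact (hlabel_spec _ (hoff i j hij)).1 h
  · simp at h
  · rw [hM hij] at h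
    exact (hlabel_spec _ (hoff i j hij)).2 h

namespace IsGeometricRealization

theorem apply_self (h : IsGeometricRealization M B α) (i : I) : B (α i) (α i) = 1 := by
  simpa using h.eq_neg_cos (i := i) (j := i) (by simp)

theorem isLiftable (h : IsGeometricRealization M B α) :
    M.IsLiftable fun i => unitReflection B (h.apply_self i) := by
  intro i j
  obtain rfl | hij := eq_or_ne i j
  · rw [unitReflection_mul_self, one_pow]
  obtain h0 | h0 := eq_or_ne (M i j) 0
  · rw [h0, pow_zero]
  · have hk : 2 ≤ M i j := by have := M.off_diagonal i j hij; lia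
    exact unitReflection_mul_pow_eq_one _ _ h.isSymm hk (h.eq_neg_cos h0)

theorem chebyshevU_eval_nonneg (h : IsGeometricRealization M B α) {i j : I} (hij : i ≠ j) {n : ℕ}
    (hn : M i j ≠ 0 → n < M i j) :
    0 ≤ (U ℝ n).eval (-B (α i) (α j)) := by
  obtain h0 | h0 := eq_or_ne (M i j) 0
  · exact chebyshevU_eval_nonneg_of_one_le (by linarith [h.le_neg_one h0]) n
  · have hk : 2 ≤ M i j := by have := M.off_diagonal i j hij; lia
    rw [h.eq_neg_cos h0, neg_neg]
    exact chebyshevU_eval_cos_pi_div_nonneg hk (hn h0)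

/-- The geometric representation of a Coxeter group, in which simple generators act as orthogonal
reflections in the simple roots. -/
def rep (h : IsGeometricRealization M B α) (cs : CoxeterSystem M W) : W →* (E ≃ₗ[ℝ] E) :=
  cs.lift ⟨_, h.isLiftable⟩

variable (h : IsGeometricRealization M B α) (cs : CoxeterSystem M W)

theorem rep_simple (i : I) : h.rep cs (cs.simple i) = unitReflection B (h.apply_self i) :=
  cs.lift_apply_simple h.isLiftable i

theorem rep_alternatingWord_apply (i j : I) (n : ℕ) :
    h.rep cs (cs.wordProd (alternatingWord i j n)) (α i) =
      (U ℝ n).eval (-B (α i) (α j)) • α (if Even n then i else j) +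
        (U ℝ (n - 1)).eval (-B (α i) (α j)) • α (if Even n then j else i) := by
  induction n with
  | zero => simp [alternatingWord]
  | succ n ih =>
    have hpair : B (α (if Even n then j else i)) (α (if Even n then i else j)) =
        -(-B (α i) (α j)) := by
      split_ifs <;> simp [h.isSymm.eq (α j)]
    rw [alternatingWord_succ', wordProd_cons, map_mul, LinearEquiv.mul_apply, ih, rep_simple,
      unitReflection_chebyshev _ hpair, add_comm]
    simp [Nat.even_add_one, -Nat.not_even_iff_odd, -U_eval_neg]

theorem rep_mul_alternatingWord_apply_mem {C : PointedCone ℝ E} {v : W} {i j : I} (hij : i ≠ j)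
    (hvi : h.rep cs v (α i) ∈ C) (hvj : h.rep cs v (α j) ∈ C) {n : ℕ}
    (hn : M i j ≠ 0 → n + 1 < M i j) :
    h.rep cs (v * cs.wordProd (alternatingWord i j (n + 1))) (α i) ∈ C := by
  have hU := h.chebyshevU_eval_nonneg hij hn
  have hU' := h.chebyshevU_eval_nonneg hij fun h0 => (Nat.lt_succ_self n).trans (hn h0)
  rw [map_mul, LinearEquiv.mul_apply, rep_alternatingWord_apply, map_add, map_smul, map_smul]
  push_cast at hU ⊢
  rw [add_sub_cancel_right]
  refine C.add_mem (C.smul_mem hU ?_) (C.smul_mem hU' ?_) <;> split_ifs <;> assumption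

theorem rep_apply_mem_hull {w : W} {i : I} (hi : ¬cs.IsRightDescent w i) :
    h.rep cs w (α i) ∈ PointedCone.hull ℝ (Set.range α) := by
  induction hlen : cs.length w using Nat.strong_induction_on generalizing w i with
  | _ _ ih =>
    subst hlen
    obtain rfl | hw := eq_or_ne w 1
    · simpa using PointedCone.subset_hull (Set.mem_range_self i)
    obtain ⟨j, hj⟩ := cs.exists_rightDescent_of_ne_one hw
    have hij : i ≠ j := by rintro rfl; exact hi hj
    obtain ⟨v, n, rfl, hlen, hvi, hvj⟩ := exists_eq_mul_wordProd_alternatingWord cs w hi j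
    obtain _ | n := n
    · simp [alternatingWord, hvj] at hj
    have hlt : cs.length v < cs.length (v * cs.wordProd (alternatingWord i j (n + 1))) := by lia
    exact h.rep_mul_alternatingWord_apply_mem cs hij (ih _ hlt hvi rfl) (ih _ hlt hvj rfl)
      (lt_coxeterMatrix_of_not_isRightDescent cs hlen hi)

theorem rep_apply_mem_hull_or_neg_mem_hull (w : W) (i : I) :
    h.rep cs w (α i) ∈ PointedCone.hull ℝ (Set.range α) ∨
      -h.rep cs w (α i) ∈ PointedCone.hull ℝ (Set.range α) := by
  by_cases hi : cs.IsRightDescent w i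
  · right
    have hmem := h.rep_apply_mem_hull cs (cs.isRightDescent_iff_not_isRightDescent_mul.1 hi)
    rwa [map_mul, LinearEquiv.mul_apply, rep_simple, unitReflection_apply_self, map_neg] at hmem
  · exact Or.inl (h.rep_apply_mem_hull cs hi)

end IsGeometricRealization

end GeometricRepresentation

theorem repr_nonneg_of_mem_hull {J E : Type*} [AddCommGroup E] [Module ℝ E]
    {b : Module.Basis J ℝ E} {v : E} (hv : v ∈ PointedCone.hull ℝ (Set.range b)) (i : J) :
    0 ≤ b.repr v i := by
  classical
  induction hv using Submodule.span_induction with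
  | mem v hv =>
    obtain ⟨j, rfl⟩ := hv
    rw [b.repr_self_apply]
    split_ifs <;> norm_num
  | zero => simp
  | add u v _ _ hu hv => simpa using add_nonneg hu hv
  | smul r v _ hv =>
    have hrv : 0 ≤ (r : ℝ) * b.repr v i := mul_nonneg r.2 hv
    rwa [← smul_eq_mul, ← Finsupp.smul_apply, ← map_smul] at hrv

section RootSystem

variable {B : LinearMap.BilinForm ℝ V} {J : Type*} {Δ : Module.Basis J ℝ V}

theorem mem_simpleReflections_iff (hdiag : ∀ i, B (Δ i) (Δ i) = 1) {e : V ≃ₗ[ℝ] V} :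
    e ∈ simpleReflections B Δ ↔ ∃ i, e = unitReflection B (hdiag i) := by
  simp [simpleReflections, LinearEquiv.ext_iff, unitReflection_apply, hdiag]

theorem bilin_apply_apply_of_mem_cox (hB : B.IsSymm) (hdiag : ∀ i, B (Δ i) (Δ i) = 1)
    {w : V ≃ₗ[ℝ] V} (hw : w ∈ cox B Δ) (u v : V) : B (w u) (w v) = B u v := by
  induction hw using Subgroup.closure_induction generalizing u v with
  | mem e he =>
    obtain ⟨i, rfl⟩ := (mem_simpleReflections_iff hdiag).1 he
    exact bilin_unitReflection (hdiag i) hB u v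
  | one => rfl
  | mul w₁ w₂ _ _ h₁ h₂ => exact (h₁ _ _).trans (h₂ u v)
  | inv w _ h => rw [← h, ← LinearEquiv.mul_apply, ← LinearEquiv.mul_apply, mul_inv_cancel]; rfl

theorem bilin_self_of_mem_Phi (hB : B.IsSymm) (hdiag : ∀ i, B (Δ i) (Δ i) = 1) {ρ : V}
    (hρ : ρ ∈ Phi B Δ) : B ρ ρ = 1 := by
  obtain ⟨w, hw, i, rfl⟩ := hρ
  rw [bilin_apply_apply_of_mem_cox hB hdiag hw, hdiag]

theorem exists_mem_cox_apply_eq_reflAt (hB : B.IsSymm) (hdiag : ∀ i, B (Δ i) (Δ i) = 1) {ρ : V}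
    (hρ : ρ ∈ Phi B Δ) (x : V) : ∃ w ∈ cox B Δ, w x = reflAt B ρ x := by
  have hρρ := bilin_self_of_mem_Phi hB hdiag hρ
  obtain ⟨w, hw, i, rfl⟩ := hρ
  have hs : unitReflection B (hdiag i) ∈ cox B Δ :=
    Subgroup.subset_closure ((mem_simpleReflections_iff hdiag).2 ⟨i, rfl⟩)
  have hx : w (w⁻¹ x) = x := w.apply_symm_apply x
  refine ⟨w * unitReflection B (hdiag i) * w⁻¹, mul_mem (mul_mem hw hs) (inv_mem hw), ?_⟩
  rw [LinearEquiv.mul_apply, LinearEquiv.mul_apply, unitReflection_apply, map_sub, map_smul, hx,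
    ← bilin_apply_apply_of_mem_cox hB hdiag hw (Δ i), hx, reflAt, hρρ, div_one]

theorem mem_hull_or_neg_mem_hull_of_mem_Phi {M : CoxeterMatrix J}
    (h : IsGeometricRealization M B Δ) {ρ : V} (hρ : ρ ∈ Phi B Δ) :
    ρ ∈ PointedCone.hull ℝ (Set.range Δ) ∨ -ρ ∈ PointedCone.hull ℝ (Set.range Δ) := by
  obtain ⟨w, hw, i, rfl⟩ := hρ
  have hle : cox B Δ ≤ (h.rep M.toCoxeterSystem).range := by
    refine (Subgroup.closure_le _).2 fun e he => ?_
    obtain ⟨j, rfl⟩ := (mem_simpleReflections_iff h.apply_self).1 he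
    exact ⟨_, h.rep_simple _ j⟩
  obtain ⟨g, rfl⟩ := hle hw
  exact h.rep_apply_mem_hull_or_neg_mem_hull _ g i

end RootSystem

section CoordinateSum

variable {B : LinearMap.BilinForm ℝ V} {Δ : Module.Basis ι ℝ V}

theorem l1_add (u v : V) : l1 Δ (u + v) = l1 Δ u + l1 Δ v := by
  simp [l1, Finset.sum_add_distrib]

theorem l1_smul (r : ℝ) (v : V) : l1 Δ (r • v) = r * l1 Δ v := by
  simp [l1, Finset.mul_sum]

theorem eq_zero_of_mem_hull_of_l1_eq_zero {v : V} (hv : v ∈ PointedCone.hull ℝ (Set.range Δ))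
    (hl : l1 Δ v = 0) : v = 0 :=
  Δ.ext_elem fun i => by
    rw [map_zero, Finsupp.zero_apply]
    exact (Finset.sum_eq_zero_iff_of_nonneg fun j _ => repr_nonneg_of_mem_hull hv j).1 hl i
      (Finset.mem_univ i)

theorem l1_ne_zero_of_mem_Phi {M : CoxeterMatrix ι} (h : IsGeometricRealization M B Δ) {ρ : V}
    (hρ : ρ ∈ Phi B Δ) : l1 Δ ρ ≠ 0 := by
  intro hl
  have hρ0 : ρ = 0 := by
    obtain hpos | hneg := mem_hull_or_neg_mem_hull_of_mem_Phi h hρ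
    · exact eq_zero_of_mem_hull_of_l1_eq_zero hpos hl
    · exact neg_eq_zero.1 <| eq_zero_of_mem_hull_of_l1_eq_zero hneg <| by
        rw [← neg_one_smul ℝ ρ, l1_smul, hl, mul_zero]
  simpa [hρ0] using bilin_self_of_mem_Phi h.isSymm h.apply_self hρ

end CoordinateSum

section IsotropicLine

variable {B : LinearMap.BilinForm ℝ V} {Δ : Module.Basis ι ℝ V} {ρ x : V}

theorem l1_reflAt : l1 Δ (reflAt B ρ x) = l1 Δ x - 2 * B ρ x / B ρ ρ * l1 Δ ρ := by
  rw [reflAt, sub_eq_add_neg, ← neg_smul, l1_add, l1_smul]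
  ring

theorem reflAt_eq_self_iff (hρ : B ρ ρ ≠ 0) : reflAt B ρ x = x ↔ B ρ x = 0 := by
  have hρ0 : ρ ≠ 0 := by
    rintro rfl
    simp at hρ
  simp [reflAt, hρ, hρ0]

theorem nrm_reflAt_eq_self_iff (hρ : B ρ ρ ≠ 0) (hxQ : B x x = 0) (hx1 : l1 Δ x = 1)
    (hxρ : l1 Δ (reflAt B ρ x) ≠ 0) : nrm Δ (reflAt B ρ x) = x ↔ B ρ x = 0 := by
  refine ⟨fun hfix => ?_, fun h => ?_⟩
  · have hscale : reflAt B ρ x = l1 Δ (reflAt B ρ x) • x := by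
      rw [nrm, inv_smul_eq_iff₀ hxρ] at hfix
      exact hfix
    have hBx : B (reflAt B ρ x) x = 0 := by rw [hscale]; simp [hxQ]
    have hsq : 2 * B ρ x / B ρ ρ * B ρ x = 0 := by simpa [reflAt, hxQ] using hBx
    simpa [hρ] using hsq
  · rw [(reflAt_eq_self_iff hρ).2 h, nrm, hx1, inv_one, one_smul]

theorem bilin_self_nrm_add_smul_sub (hB : B.IsSymm) (hρ : B ρ ρ ≠ 0) (hρ1 : l1 Δ ρ ≠ 0)
    (hxQ : B x x = 0) (hx1 : l1 Δ x = 1) (t : ℝ) :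
    B (nrm Δ ρ + t • (x - nrm Δ ρ)) (nrm Δ ρ + t • (x - nrm Δ ρ)) =
      B ρ ρ / l1 Δ ρ ^ 2 * ((1 - t) * (1 - t * l1 Δ (reflAt B ρ x))) := by
  simp only [nrm, l1_reflAt, map_add, map_sub, map_smul, LinearMap.add_apply, LinearMap.sub_apply,
    LinearMap.smul_apply, smul_eq_mul, hB.eq x ρ, hxQ, hx1]
  field_simp
  ring

theorem nrm_reflAt_eq_nrm_add_smul_sub (hρ1 : l1 Δ ρ ≠ 0) (hx1 : l1 Δ x = 1)
    (hxρ : l1 Δ (reflAt B ρ x) ≠ 0) :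
    nrm Δ (reflAt B ρ x) = nrm Δ ρ + (l1 Δ (reflAt B ρ x))⁻¹ • (x - nrm Δ ρ) := by
  have hcoeff : 2 * B ρ x / B ρ ρ = (1 - l1 Δ (reflAt B ρ x)) * (l1 Δ ρ)⁻¹ := by
    rw [l1_reflAt, hx1]
    field_simp
    ring
  set s := l1 Δ (reflAt B ρ x)
  have hmul : s • nrm Δ (reflAt B ρ x) = s • (nrm Δ ρ + s⁻¹ • (x - nrm Δ ρ)) := by
    rw [nrm, smul_inv_smul₀ hxρ, smul_add, smul_inv_smul₀ hxρ, reflAt, hcoeff, nrm]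
    module
  exact smul_right_injective V hxρ hmul

theorem lineThrough_nrm_inter_isoQ (hB : B.IsSymm) (hρ : B ρ ρ ≠ 0) (hρ1 : l1 Δ ρ ≠ 0)
    (hxQ : B x x = 0) (hx1 : l1 Δ x = 1) (hxρ : l1 Δ (reflAt B ρ x) ≠ 0) :
    lineThrough (nrm Δ ρ) x ∩ isoQ B = {x, nrm Δ (reflAt B ρ x)} := by
  have hroot (t : ℝ) : nrm Δ ρ + t • (x - nrm Δ ρ) ∈ isoQ B ↔
      t = 1 ∨ t = (l1 Δ (reflAt B ρ x))⁻¹ := by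
    change B _ _ = 0 ↔ _
    rw [bilin_self_nrm_add_smul_sub hB hρ hρ1 hxQ hx1]
    simp [hρ, hρ1, sub_eq_zero, eq_comm (a := (1 : ℝ)), mul_eq_one_iff_eq_inv₀ hxρ]
  have hx : x = nrm Δ ρ + (1 : ℝ) • (x - nrm Δ ρ) := by simp
  ext y
  constructor
  · rintro ⟨⟨t, rfl⟩, ht⟩
    obtain rfl | rfl := (hroot t).1 ht
    · exact Or.inl hx.symm
    · exact Or.inr (nrm_reflAt_eq_nrm_add_smul_sub hρ1 hx1 hxρ).symm
  · rintro (rfl | rfl)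
    · exact ⟨⟨1, hx⟩, hxQ⟩
    · rw [nrm_reflAt_eq_nrm_add_smul_sub hρ1 hx1 hxρ]
      exact ⟨⟨_, rfl⟩, (hroot _).2 (Or.inr rfl)⟩

end IsotropicLine

theorem statement11_general (B : LinearMap.BilinForm ℝ V) (Δ : Module.Basis ι ℝ V)
    (hsymm : ∀ u v : V, B u v = B v u)
    (hdiag : ∀ i : ι, B (Δ i) (Δ i) = 1)
    (hoff : ∀ i j : ι, i ≠ j → B (Δ i) (Δ j) ≤ -1 ∨
      ∃ k : ℕ, 2 ≤ k ∧ B (Δ i) (Δ j) = -Real.cos (Real.pi / (k : ℝ)))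
    (ρ : V) (hρ : ρ ∈ Phi B Δ)
    (x : V) (hxQ : B x x = 0) (hx1 : l1 Δ x = 1)
    (hxρ : l1 Δ (reflAt B ρ x) ≠ 0) :
    (B ρ x = 0 →
      lineThrough (nrm Δ ρ) x ∩ isoQ B = {x} ∧ nrm Δ (reflAt B ρ x) = x) ∧
    (B ρ x ≠ 0 →
      nrm Δ (reflAt B ρ x) ≠ x ∧
      lineThrough (nrm Δ ρ) x ∩ isoQ B = {x, nrm Δ (reflAt B ρ x)}) := by
  obtain ⟨M, hM⟩ := exists_isGeometricRealization ⟨hsymm⟩ hdiag hoff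
  have hρρ : B ρ ρ ≠ 0 := by simp [bilin_self_of_mem_Phi ⟨hsymm⟩ hdiag hρ]
  have hfixed := nrm_reflAt_eq_self_iff hρρ hxQ hx1 hxρ
  have hinter :=
    lineThrough_nrm_inter_isoQ ⟨hsymm⟩ hρρ (l1_ne_zero_of_mem_Phi hM hρ) hxQ hx1 hxρ
  exact ⟨fun h => ⟨by rw [hinter, hfixed.2 h, Set.pair_eq_singleton], hfixed.2 h⟩,
    fun h => ⟨mt hfixed.1 h, hinter⟩⟩

/-- Let `ρ ∈ Φ` and `x ∈ Q ∩ V₁` with `w(x) ∉ V₀` for all `w ∈ W`.  Then: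
(a) if `B(ρ,x) = 0`, the line `L(ρ̂,x)` meets `Q` only in `x` and `s_ρ·x = x`;
(b) if `B(ρ,x) ≠ 0`, then `s_ρ·x ≠ x` and `L(ρ̂,x) ∩ Q = {x, s_ρ·x}`. -/
theorem statement11 (B : LinearMap.BilinForm ℝ V) (Δ : Module.Basis ι ℝ V)
    (hsymm : ∀ u v : V, B u v = B v u)
    (hdiag : ∀ i : ι, B (Δ i) (Δ i) = 1)
    (hoff : ∀ i j : ι, i ≠ j → B (Δ i) (Δ j) ≤ -1 ∨
      ∃ k : ℕ, 2 ≤ k ∧ B (Δ i) (Δ j) = -Real.cos (Real.pi / (k : ℝ)))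
    (ρ : V) (hρ : ρ ∈ Phi B Δ)
    (x : V) (hxQ : B x x = 0) (hx1 : l1 Δ x = 1)
    (hxD : ∀ w ∈ cox B Δ, l1 Δ (w x) ≠ 0) :
    (B ρ x = 0 →
      lineThrough (nrm Δ ρ) x ∩ isoQ B = {x} ∧ nrm Δ (reflAt B ρ x) = x) ∧
    (B ρ x ≠ 0 →
      nrm Δ (reflAt B ρ x) ≠ x ∧
      lineThrough (nrm Δ ρ) x ∩ isoQ B = {x, nrm Δ (reflAt B ρ x)}) := by
  obtain ⟨w, hw, hwx⟩ := exists_mem_cox_apply_eq_reflAt ⟨hsymm⟩ hdiag hρ x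
  exact statement11_general B Δ hsymm hdiag hoff ρ hρ x hxQ hx1 (hwx ▸ hxD w hw)
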